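/- Let n ≥ 3. The top-trading-cycle rule TTC on any domain D of preferences satisfies equity under unanimous acclaim: at every profile P at which an acclaimed agent i exists, TTC_i(P) = max^{P_i} O^active(P). -/

import Mathlib

/-! After one round of top trading cycles all null agents are gone, because each forms a self-loop.
A pointing cycle through an active agent never meets a null agent (nobody leaves a self-loop), so
inside such a cycle every agent points to her best active object. Hence, for the acclaimed agent
`i` and `j = max^{P_i} O^active`, any first-round cycle through `i` sends `i` to `j`, and any
first-round cycle through `j` also passes through `i`. So either `i` already receives `j` in the
first round, or both survive it; in the latter case only active agents remain, `i` and `j` point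
at each other, and `i` receives `j` in the second round. Assignments are never revised, and the
`n ≥ 3` rounds of the algorithm suffice. -/

/-- A preference is a strict linear order on the objects `Fin n`, encoded by its
rank function: `p o < p o'` means object `o` is strictly preferred to `o'`. -/
abbrev Pref (n : ℕ) := Fin n ≃ Fin n

/-- `o` is strictly preferred to `o'` under `p`. -/
def prefers {n : ℕ} (p : Pref n) (o o' : Fin n) : Prop := p o < p o'

/-- `o` is weakly preferred to `o'` under `p` (i.e. `o P o'` or `o = o'`). -/
def weakPref {n : ℕ} (p : Pref n) (o o' : Fin n) : Prop := p o ≤ p o'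

/-- The top-ranked object `r_1(p)`. -/
def topObj {n : ℕ} [NeZero n] (p : Pref n) : Fin n := p.symm 0

/-- The second-ranked object `r_2(p)`. -/
def secondObj {n : ℕ} [NeZero n] (p : Pref n) : Fin n := p.symm 1

/-- The `p`-best object of a (nonempty) finite set `S`: `max^p S`. -/
noncomputable def best {n : ℕ} [NeZero n] (p : Pref n) (S : Finset (Fin n)) : Fin n :=
  (S.toList.argmin (fun o => p o)).getD 0

/-- A profile belongs to the domain `D` coordinatewise. -/
def inD {n : ℕ} (D : Set (Pref n)) (P : Fin n → Pref n) : Prop := ∀ i, P i ∈ D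

/-- Individual rationality of an allocation at a profile: each agent `i` weakly
prefers her assigned object to her endowment `o_i = i`. -/
def IRAt {n : ℕ} (P : Fin n → Pref n) (m : Fin n → Fin n) : Prop :=
  ∀ i, weakPref (P i) (m i) i

/-- `m'` Pareto dominates `m` at profile `P`. -/
def ParetoDom {n : ℕ} (P : Fin n → Pref n) (m' m : Fin n → Fin n) : Prop :=
  (∀ i, weakPref (P i) (m' i) (m i)) ∧ ∃ j, prefers (P j) (m' j) (m j)

/-- Pareto efficiency of an allocation at a profile. -/
def EffAt {n : ℕ} (P : Fin n → Pref n) (m : Fin n → Fin n) : Prop :=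
  ¬ ∃ m' : Fin n → Fin n, Function.Bijective m' ∧ ParetoDom P m' m

/-- A rule maps profiles from the domain to allocations (bijections `N → O`). -/
def IsRule {n : ℕ} (D : Set (Pref n)) (f : (Fin n → Pref n) → (Fin n → Fin n)) : Prop :=
  ∀ P, inD D P → Function.Bijective (f P)

def Efficient {n : ℕ} (D : Set (Pref n)) (f : (Fin n → Pref n) → (Fin n → Fin n)) : Prop :=
  ∀ P, inD D P → EffAt P (f P)

def IndRational {n : ℕ} (D : Set (Pref n)) (f : (Fin n → Pref n) → (Fin n → Fin n)) : Prop :=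
  ∀ P, inD D P → IRAt P (f P)

def StrategyProof {n : ℕ} (D : Set (Pref n)) (f : (Fin n → Pref n) → (Fin n → Fin n)) : Prop :=
  ∀ P, inD D P → ∀ i, ∀ p' ∈ D, weakPref (P i) (f P i) (f (Function.update P i p') i)

/-- The active agents at profile `P` (those whose top object differs from their
endowment); since `o_i = i`, the set of active objects coincides with it. -/
def activeAgents {n : ℕ} [NeZero n] (P : Fin n → Pref n) : Finset (Fin n) :=
  Finset.univ.filter (fun i => topObj (P i) ≠ i)

/-- Agent `i` is the acclaimed agent at profile `P`. -/
def acclaimed {n : ℕ} [NeZero n] (P : Fin n → Pref n) (i : Fin n) : Prop :=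
  2 < (activeAgents P).card ∧ i ∈ activeAgents P ∧
    best (P i) (activeAgents P) ≠ i ∧
    ∀ j ∈ activeAgents P, j ≠ i → best (P j) (activeAgents P) = i

/-- Equity under unanimous acclaim. -/
def EquityUA {n : ℕ} [NeZero n] (D : Set (Pref n))
    (f : (Fin n → Pref n) → (Fin n → Fin n)) : Prop :=
  ∀ P, inD D P → ∀ i, acclaimed P i → f P i = best (P i) (activeAgents P)

/-- Agents `i` and `j` form the acclaimed pair at profile `P`. -/
def acclaimedPair {n : ℕ} [NeZero n] (P : Fin n → Pref n) (i j : Fin n) : Prop :=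
  ∃ Ni Nj : Finset (Fin n),
    Disjoint Ni Nj ∧ Ni ∪ Nj = activeAgents P ∧ Ni.card = Nj.card ∧ 1 < Ni.card ∧
    i ∈ Nj ∧ j ∈ Ni ∧
    (∀ l ∈ Ni, best (P l) (activeAgents P) = i) ∧
    (∀ l ∈ Nj, best (P l) (activeAgents P) = j)

/-- Equity under bipartite acclaim. -/
def EquityBA {n : ℕ} [NeZero n] (D : Set (Pref n))
    (f : (Fin n → Pref n) → (Fin n → Fin n)) : Prop :=
  ∀ P, inD D P → ∀ i j, acclaimedPair P i j → f P i = j ∨ f P j = i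

/-- Equity⁺ under bipartite acclaim. -/
def EquityPlusBA {n : ℕ} [NeZero n] (D : Set (Pref n))
    (f : (Fin n → Pref n) → (Fin n → Fin n)) : Prop :=
  ∀ P, inD D P → ∀ i j, acclaimedPair P i j → f P i = j ∧ f P j = i

/-- Single-peakedness of `p` w.r.t. the linear order on objects encoded by the
position permutation `σ` (`o < o'` iff `σ o < σ o'`). -/
def singlePeaked {n : ℕ} [NeZero n] (σ : Fin n ≃ Fin n) (p : Pref n) : Prop :=
  ∀ o o' : Fin n,
    ((σ o' < σ o ∧ σ o < σ (topObj p)) ∨ (σ (topObj p) < σ o ∧ σ o < σ o')) →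
    prefers p o o'

/-- The full single-peaked domain `D_<`. -/
def spDomain {n : ℕ} [NeZero n] (σ : Fin n ≃ Fin n) : Set (Pref n) :=
  {p | singlePeaked σ p}

/-- `D` is a single-peaked domain. -/
def IsSPDomain {n : ℕ} [NeZero n] (D : Set (Pref n)) : Prop :=
  ∃ σ : Fin n ≃ Fin n, D ⊆ spDomain σ

/-- Objects `o` and `o'` are connected in `D`: `o ∼ o'`. -/
def connectedObj {n : ℕ} [NeZero n] (D : Set (Pref n)) (o o' : Fin n) : Prop :=
  ∃ p ∈ D, ∃ p' ∈ D, topObj p = o ∧ secondObj p = o' ∧ topObj p' = o' ∧ secondObj p' = o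

/-- `D` is path-connected. -/
def pathConnected {n : ℕ} [NeZero n] (D : Set (Pref n)) : Prop :=
  ∀ o o' : Fin n, o ≠ o' → ∃ l : List (Fin n),
    l.Nodup ∧ l.head? = some o ∧ l.getLast? = some o' ∧ l.Chain' (connectedObj D)

/-- `p` and `p'` rank all objects in exactly opposite orders. -/
def reversedPair {n : ℕ} (p p' : Pref n) : Prop :=
  ∀ o o', prefers p o o' ↔ prefers p' o' o

/-- A rich domain: path-connected and containing two completely reversed preferences. -/
def richDomain {n : ℕ} [NeZero n] (D : Set (Pref n)) : Prop :=
  pathConnected D ∧ ∃ p ∈ D, ∃ p' ∈ D, reversedPair p p'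

/-- The restriction `→(x,y,z) ∈ R(D)`: whenever `x` is the best of `{x,y,z}`,
`y` is ranked above `z`. -/
def RestrR {n : ℕ} [NeZero n] (D : Set (Pref n)) (x y z : Fin n) : Prop :=
  ∀ p ∈ D, best p {x, y, z} = x → prefers p y z

/-- The ternary relation `(x,y,z) ∈ B(D)`. -/
def RelB {n : ℕ} [NeZero n] (D : Set (Pref n)) (x y z : Fin n) : Prop :=
  RestrR D x y z ∧ RestrR D z y x

/-! ### Extensive game forms and obvious strategy-proofness -/

/-- An extensive game form: a finite rooted tree of histories (lists of actions,
prefix-closed), a player function and an outcome function on terminal histories. -/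
structure GameForm (n : ℕ) where
  hist : Finset (List ℕ)
  root_mem : [] ∈ hist
  prefix_closed : ∀ h a, h ++ [a] ∈ hist → h ∈ hist
  player : List ℕ → Fin n
  outcome : List ℕ → (Fin n → Fin n)

/-- A strategy chooses an action at every history. -/
abbrev Strategy : Type := List ℕ → ℕ

/-- Terminal histories of the game form. -/
def GameForm.Terminal {n : ℕ} (Γ : GameForm n) (h : List ℕ) : Prop :=
  h ∈ Γ.hist ∧ ∀ a, h ++ [a] ∉ Γ.hist

/-- A strategy of agent `i` is valid if it always chooses a feasible action. -/
def GameForm.ValidStrat {n : ℕ} (Γ : GameForm n) (i : Fin n) (s : Strategy) : Prop :=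
  ∀ h ∈ Γ.hist, ¬ Γ.Terminal h → Γ.player h = i → h ++ [s h] ∈ Γ.hist

/-- Play from `h` under the strategy profile `s` reaches history `h'`. -/
inductive GameForm.Reaches {n : ℕ} (Γ : GameForm n) (s : Fin n → Strategy) :
    List ℕ → List ℕ → Prop
  | refl (h : List ℕ) : GameForm.Reaches Γ s h h
  | step {h h' : List ℕ} : GameForm.Reaches Γ s h h' → h' ∈ Γ.hist → ¬ Γ.Terminal h' →
      GameForm.Reaches Γ s h (h' ++ [s (Γ.player h') h'])

/-- `o` belongs to the feasible set `X_i(h, s_i)` of agent `i` at history `h`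
given her strategy `si`. -/
def GameForm.Feas {n : ℕ} (Γ : GameForm n) (i : Fin n) (h : List ℕ) (si : Strategy)
    (o : Fin n) : Prop :=
  ∃ s : Fin n → Strategy, (∀ j, Γ.ValidStrat j (s j)) ∧ s i = si ∧
    ∃ t, Γ.Reaches s h t ∧ Γ.Terminal t ∧ Γ.outcome t i = o

/-- `h` is a decision node of `i` reachable (on-path) when `i` plays `si`. -/
def GameForm.ReachableNode {n : ℕ} (Γ : GameForm n) (i : Fin n) (si : Strategy)
    (h : List ℕ) : Prop :=
  h ∈ Γ.hist ∧ ¬ Γ.Terminal h ∧ Γ.player h = i ∧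
    ∃ s : Fin n → Strategy, (∀ j, Γ.ValidStrat j (s j)) ∧ s i = si ∧ Γ.Reaches s [] h

/-- `si` obviously dominates `si'` at preference `p`: at every earliest point of
departure, the worst feasible outcome under `si` is weakly preferred to the best
feasible outcome under `si'`. -/
def GameForm.ObvDom {n : ℕ} (Γ : GameForm n) (i : Fin n) (p : Pref n)
    (si si' : Strategy) : Prop :=
  ∀ h, Γ.ReachableNode i si h → Γ.ReachableNode i si' h → si h ≠ si' h →
    ∀ o o', Γ.Feas i h si o → Γ.Feas i h si' o' → weakPref p o o'

/-- Obvious strategy-proofness of a rule `f` on domain `D`. -/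
def OSP {n : ℕ} (D : Set (Pref n)) (f : (Fin n → Pref n) → (Fin n → Fin n)) : Prop :=
  ∃ (Γ : GameForm n) (S : Fin n → Pref n → Strategy),
    (∀ i p, p ∈ D → Γ.ValidStrat i (S i p)) ∧
    (∀ i p, p ∈ D → ∀ s', Γ.ValidStrat i s' → Γ.ObvDom i p (S i p) s') ∧
    (∀ P : Fin n → Pref n, inD D P →
      ∃ t, Γ.Reaches (fun j => S j (P j)) [] t ∧ Γ.Terminal t ∧ Γ.outcome t = f P)

/-! ### The crawler, the designator, and top trading cycles -/

/-- The running state of the crawler/designator algorithms: the sub-allocation of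
objects currently held by remaining agents, and the final assignments so far. -/
structure AlgState (n : ℕ) where
  held : Fin n → Option (Fin n)
  res : Fin n → Option (Fin n)

/-- The object currently held by agent `i`. -/
def heldObj {n : ℕ} [NeZero n] (st : AlgState n) (i : Fin n) : Fin n := (st.held i).getD 0

/-- The remaining agents. -/
def remAgents {n : ℕ} (st : AlgState n) : Finset (Fin n) :=
  Finset.univ.filter (fun i => (st.held i).isSome)

/-- The remaining objects. -/
def remObjs {n : ℕ} [NeZero n] (st : AlgState n) : Finset (Fin n) :=
  (remAgents st).image (heldObj st)

/-- The object of `S` adjacently larger than `o` w.r.t. the order `σ`. -/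
noncomputable def adjLarger {n : ℕ} (σ : Fin n ≃ Fin n) (S : Finset (Fin n)) (o : Fin n) : Fin n :=
  ((S.filter (fun o' => σ o < σ o')).toList.argmin (fun o' => σ o')).getD o

/-- The agent `i^s` leaving at the current step: the remaining agent holding the
`σ`-smallest object among those whose best remaining object is weakly below their
held object. -/
noncomputable def leaver {n : ℕ} [NeZero n] (σ : Fin n ≃ Fin n) (P : Fin n → Pref n)
    (st : AlgState n) : Option (Fin n) :=
  ((remAgents st).filter
      (fun i => σ (best (P i) (remObjs st)) ≤ σ (heldObj st i))).toList.argmin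
    (fun i => σ (heldObj st i))

/-- One step of the crawler: the leaving agent takes her best remaining object,
and every remaining agent holding an object weakly above the taken object and
strictly below the leaver's object crawls to the adjacently larger object. -/
noncomputable def crawlerStep {n : ℕ} [NeZero n] (σ : Fin n ≃ Fin n) (P : Fin n → Pref n)
    (st : AlgState n) : AlgState n :=
  match leaver σ P st with
  | none => st
  | some is =>
    let taken := best (P is) (remObjs st)
    { held := fun j =>
        if j = is then none
        else if (st.held j).isSome = true ∧ σ taken ≤ σ (heldObj st j) ∧
            σ (heldObj st j) < σ (heldObj st is) then
          some (adjLarger σ (remObjs st) (heldObj st j))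
        else st.held j,
      res := Function.update st.res is (some taken) }

/-- Initially every agent holds her endowment `o_i = i`. -/
def crawlerInit (n : ℕ) : AlgState n := ⟨fun i => some i, fun _ => none⟩

/-- The crawler rule w.r.t. the object order `σ`. -/
noncomputable def crawler {n : ℕ} [NeZero n] (σ : Fin n ≃ Fin n) (P : Fin n → Pref n) :
    Fin n → Fin n :=
  fun i => (((crawlerStep σ P)^[n] (crawlerInit n)).res i).getD 0

/-- `τ(i)`: the active agent whose endowment is `max^{P_i} O_{m̄⁰}`. -/
noncomputable def desTau {n : ℕ} [NeZero n] (P : Fin n → Pref n) (i : Fin n) : Fin n :=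
  best (P i) (activeAgents P)

/-- Stage I of the designator: null agents receive their endowments and leave. -/
def desInit {n : ℕ} [NeZero n] (P : Fin n → Pref n) : AlgState n :=
  { held := fun i => if topObj (P i) = i then none else some i,
    res := fun i => if topObj (P i) = i then some i else none }

/-- One step of Stage II of the designator: the leaving agent `i^s` takes her best
remaining object; if `τ(i^s)` is remaining and holds an object weakly above the
taken object and strictly below `i^s`'s held object, then `τ(i^s)` directly
inherits `i^s`'s object and only agents below `τ(i^s)` crawl (designating);
otherwise the crawling updating applies. -/
noncomputable def desStep {n : ℕ} [NeZero n] (σ : Fin n ≃ Fin n) (P : Fin n → Pref n)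
    (st : AlgState n) : AlgState n :=
  match leaver σ P st with
  | none => st
  | some is =>
    let taken := best (P is) (remObjs st)
    let t := desTau P is
    if (st.held t).isSome = true ∧ σ taken ≤ σ (heldObj st t) ∧
        σ (heldObj st t) < σ (heldObj st is) then
      { held := fun j =>
          if j = is then none
          else if j = t then some (heldObj st is)
          else if (st.held j).isSome = true ∧ σ taken ≤ σ (heldObj st j) ∧
              σ (heldObj st j) < σ (heldObj st t) then
            some (adjLarger σ (remObjs st) (heldObj st j))
          else st.held j,
        res := Function.update st.res is (some taken) }
    else
      { held := fun j =>
          if j = is then none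
          else if (st.held j).isSome = true ∧ σ taken ≤ σ (heldObj st j) ∧
              σ (heldObj st j) < σ (heldObj st is) then
            some (adjLarger σ (remObjs st) (heldObj st j))
          else st.held j,
        res := Function.update st.res is (some taken) }

/-- The designator rule w.r.t. the object order `σ`. -/
noncomputable def designator {n : ℕ} [NeZero n] (σ : Fin n ≃ Fin n) (P : Fin n → Pref n) :
    Fin n → Fin n :=
  fun i => (((desStep σ P)^[n] (desInit P)).res i).getD 0

/-- One round of top trading cycles: every remaining agent points to the owner of
her favorite remaining object (owner of object `o` is agent `o`), and every agent
lying on a pointing cycle receives the object she points to and leaves. -/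
noncomputable def ttcStep {n : ℕ} [NeZero n] (P : Fin n → Pref n) (res : Fin n → Option (Fin n)) :
    Fin n → Option (Fin n) :=
  let rem : Finset (Fin n) := Finset.univ.filter (fun i => res i = none)
  let pt : Fin n → Fin n := fun i => best (P i) rem
  fun i =>
    match res i with
    | some o => some o
    | none =>
      if (List.range (n + 1)).any (fun k => (k != 0) && (pt^[k] i == i)) then some (pt i)
      else none

/-- The top-trading-cycle rule. -/
noncomputable def ttc {n : ℕ} [NeZero n] (P : Fin n → Pref n) : Fin n → Fin n :=
  fun i => (((ttcStep P)^[n] (fun _ => none)) i).getD 0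

theorem best_spec {n : ℕ} [NeZero n] (p : Pref n) {S : Finset (Fin n)} (hS : S.Nonempty) :
    best p S ∈ S ∧ ∀ o ∈ S, p (best p S) ≤ p o := by
  unfold best
  cases h : S.toList.argmin (fun o => p o) with
  | none =>
    rw [List.argmin_eq_none, Finset.toList_eq_nil] at h
    exact absurd h hS.ne_empty
  | some a =>
    refine ⟨Finset.mem_toList.1 (List.argmin_mem h), fun o ho => ?_⟩
    exact List.le_of_mem_argmin (Finset.mem_toList.2 ho) h

theorem best_eq {n : ℕ} [NeZero n] (p : Pref n) {S : Finset (Fin n)} {a : Fin n}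
    (ha : a ∈ S) (h : ∀ o ∈ S, p a ≤ p o) : best p S = a := by
  obtain ⟨h1, h2⟩ := best_spec p ⟨a, ha⟩
  exact p.injective (le_antisymm (h2 a ha) (h _ h1))

/-- Independence of irrelevant alternatives: a best object stays best in any smaller set that
still contains it. -/
theorem best_subset {n : ℕ} [NeZero n] (p : Pref n) {S T : Finset (Fin n)} (hST : S ⊆ T)
    (h : best p T ∈ S) : best p S = best p T :=
  best_eq p h fun o ho => (best_spec p ⟨o, hST ho⟩).2 o (hST ho)

theorem best_univ {n : ℕ} [NeZero n] (p : Pref n) : best p Finset.univ = topObj p :=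
  best_eq p (Finset.mem_univ _) fun o _ => by simp [topObj]

theorem ttcStep_some {n : ℕ} [NeZero n] (P : Fin n → Pref n) (res : Fin n → Option (Fin n))
    {i o : Fin n} (h : res i = some o) : ttcStep P res i = some o := by
  simp [ttcStep, h]

theorem ttcStep_iterate_some {n : ℕ} [NeZero n] (P : Fin n → Pref n)
    (res : Fin n → Option (Fin n)) {i o : Fin n} (h : res i = some o) (m : ℕ) :
    (ttcStep P)^[m] res i = some o := by
  induction m with
  | zero => exact h
  | succ m ih => rw [Function.iterate_succ_apply']; exact ttcStep_some P _ ih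

/-- An unassigned agent lying on a pointing cycle receives the object she points to. -/
theorem ttcStep_cycle {n : ℕ} [NeZero n] (P : Fin n → Pref n) {res : Fin n → Option (Fin n)}
    {R : Finset (Fin n)} (hR : Finset.univ.filter (fun i => res i = none) = R)
    {i : Fin n} (h : res i = none) {k : ℕ} (hk : k ≠ 0) (hkn : k ≤ n)
    (hc : (fun a => best (P a) R)^[k] i = i) :
    ttcStep P res i = some (best (P i) R) := by
  subst hR
  have : ∃ x < n + 1, x ≠ 0 ∧
      (fun a => best (P a) (Finset.univ.filter (fun i => res i = none)))^[x] i = i :=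
    ⟨k, by omega, hk, hc⟩
  simpa [ttcStep, h] using this

/-- An unassigned agent either stays unassigned in a round or lies on a pointing cycle. -/
theorem ttcStep_none_or {n : ℕ} [NeZero n] (P : Fin n → Pref n) {res : Fin n → Option (Fin n)}
    {R : Finset (Fin n)} (hR : Finset.univ.filter (fun i => res i = none) = R)
    {i : Fin n} (h : res i = none) :
    ttcStep P res i = none ∨
      ∃ k, k ≠ 0 ∧ k ≤ n ∧ (fun a => best (P a) R)^[k] i = i := by
  by_cases hc : ∃ k, k ≠ 0 ∧ k ≤ n ∧ (fun a => best (P a) R)^[k] i = i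
  · exact Or.inr hc
  · left
    subst hR
    push Not at hc
    simp only [ttcStep, h]
    rw [if_neg]
    simp only [List.any_eq_true, List.mem_range, Bool.and_eq_true, bne_iff_ne, beq_iff_eq]
    rintro ⟨k, hk, hk0, hk'⟩
    exact hc k hk0 (by omega) hk'

/-- An active agent on a first-round pointing cycle points to her best active object: if she
pointed to a null agent, the cycle could not return, as null agents form self-loops. -/
theorem cycle_active {n : ℕ} [NeZero n] (P : Fin n → Pref n) {a : Fin n}
    (ha : a ∈ activeAgents P) {k : ℕ} (hk : k ≠ 0)
    (hc : (fun a => best (P a) Finset.univ)^[k] a = a) :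
    best (P a) Finset.univ = best (P a) (activeAgents P) := by
  refine (best_subset (P a) (Finset.subset_univ _) ?_).symm
  by_contra hb
  have hfix : Function.IsFixedPt (fun a => best (P a) Finset.univ) (best (P a) Finset.univ) := by
    simpa [Function.IsFixedPt, activeAgents, ← best_univ] using hb
  obtain ⟨m, rfl⟩ := Nat.exists_eq_succ_of_ne_zero hk
  rw [Function.iterate_succ_apply] at hc
  have h1 : best (P a) Finset.univ = a := (hfix.iterate m).symm.trans hc
  rw [h1] at hb
  exact hb ha

theorem ttc_equityUA (n : ℕ) [NeZero n] (hn : 3 ≤ n) :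
    ∀ P : Fin n → Pref n, ∀ i, acclaimed P i → ttc P i = best (P i) (activeAgents P) := by
  rintro P i ⟨-, hi, hji, hacc⟩
  obtain ⟨j, hj⟩ : ∃ j, j = best (P i) (activeAgents P) := ⟨_, rfl⟩
  rw [← hj] at hji ⊢
  have hjA : j ∈ activeAgents P := hj ▸ (best_spec (P i) ⟨i, hi⟩).1
  have hR : Finset.univ.filter (fun a : Fin n => (none : Option (Fin n)) = none)
      = Finset.univ := by simp
  -- It suffices that `i` holds `j` after two rounds.
  suffices h : ttcStep P (ttcStep P fun _ => none) i = some j by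
    obtain ⟨m, rfl⟩ := Nat.exists_eq_add_of_le' (show 2 ≤ n by omega)
    have := ttcStep_iterate_some P _ h m
    simp only [ttc, Function.iterate_succ_apply, this, Option.getD_some]
  -- Any first-round cycle through `i` settles the matter already.
  have key : ∀ k, k ≠ 0 → k ≤ n → (fun a => best (P a) Finset.univ)^[k] i = i →
      ttcStep P (ttcStep P fun _ => none) i = some j := by
    intro k hk hkn hc
    apply ttcStep_some
    rw [ttcStep_cycle P hR rfl hk hkn hc, cycle_active P hi hk hc, hj]
  rcases ttcStep_none_or P hR (i := i) rfl with hi0 | ⟨k, hk, hkn, hc⟩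
  swap
  · exact key k hk hkn hc
  rcases ttcStep_none_or P hR (i := j) rfl with hj0 | ⟨k, hk, hkn, hc⟩
  swap
  · -- The cycle through `j` goes from `j` to `i`, so it can be read as starting at `i`.
    have hpt := cycle_active P hjA hk hc
    rw [hacc j hjA hji] at hpt
    refine key k hk hkn ?_
    have h1 := congrArg (fun a => best (P a) Finset.univ) hc
    rw [← Function.iterate_succ_apply' (fun a => best (P a) Finset.univ),
      Function.iterate_succ_apply] at h1
    simpa only [hpt] using h1
  -- Both survive: only active agents remain, so `i` and `j` point at each other.
  obtain ⟨R, hRdef⟩ : ∃ R, Finset.univ.filter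
      (fun a => ttcStep P (fun _ => none) a = none) = R := ⟨_, rfl⟩
  have hRA : R ⊆ activeAgents P := by
    intro a ha
    by_contra hna
    have hfix : best (P a) Finset.univ = a := by
      simpa [activeAgents, ← best_univ] using hna
    have h1 := ttcStep_cycle P hR (i := a) rfl one_ne_zero (by omega) hfix
    rw [← hRdef] at ha
    simp [h1] at ha
  have hiR : i ∈ R := by simp [← hRdef, hi0]
  have hjR : j ∈ R := by simp [← hRdef, hj0]
  have hbi : best (P i) R = j := by
    rw [best_subset (P i) hRA (hj ▸ hjR), hj]
  have hbj : best (P j) R = i := by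
    have := hacc j hjA hji
    rw [best_subset (P j) hRA (this.symm ▸ hiR), this]
  rw [ttcStep_cycle P hRdef hi0 two_ne_zero (by omega)
    (by simp [Function.iterate_succ_apply, hbi, hbj]), hbi]
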